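/- Let R be a commutative ring and let y_1, …, y_p, x be distinct commuting indeterminates over R. Then in R[y_1, …, y_p, x], for every integer r ≥ 0: x^r = Σ_{l=0}^{r} (−1)^l · e_l(y_1, …, y_p) · h_{r−l}(y_1, …, y_p, x), where e_l denotes the elementary symmetric polynomial of degree l and h_m the complete homogeneous symmetric polynomial of degree m in the indicated variables. -/

import Mathlib

open MvPolynomial Finset

/-- The elementary symmetric polynomial of degree `l` in the variables indexed by `S`. -/
noncomputable def esymIn {σ : Type*} [DecidableEq σ] (R : Type*) [CommRing R]
    (S : Finset σ) (l : ℕ) : MvPolynomial σ R :=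
  ∑ T ∈ S.powersetCard l, ∏ a ∈ T, X a

/-- The complete homogeneous symmetric polynomial of degree `m` in the variables indexed
by `S`: the sum of all monomials of total degree `m` in those variables. -/
noncomputable def hsymIn {σ : Type*} [DecidableEq σ] (R : Type*) [CommRing R]
    (S : Finset σ) (m : ℕ) : MvPolynomial σ R :=
  ∑ t ∈ S.sym m, (t.1.map X).prod

/-!
Put `E_S(t) = ∏_{a ∈ S} (1 - a t) = ∑ (-1)^l e_l(S) t^l` and `H_T(t) = ∑ h_m(T) t^m`. Sorting
the monomials of degree `m + 1` by whether they involve `a` shows that `(1 - a t) H_T(t)` is the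
series `H` of `T` without `a`. Hence `E_S H_T = H_{T \ S}` whenever `S ⊆ T`, and for
`T \ S = {x}` the right-hand side is the geometric series `∑ x^r t^r`.
-/

section Sym

variable {σ : Type*} [DecidableEq σ]

theorem filter_mem_sym_succ {S : Finset σ} {a : σ} (ha : a ∈ S) (m : ℕ) :
    (S.sym (m + 1)).filter (a ∈ ·) = (S.sym m).image (a ::ₛ ·) := by
  ext t
  simp only [mem_filter, mem_image, mem_sym_iff]
  constructor
  · rintro ⟨ht, hat⟩
    obtain ⟨u, rfl⟩ := Sym.exists_cons_of_mem hat
    exact ⟨u, fun b hb => ht b (Sym.mem_cons_of_mem hb), rfl⟩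
  · rintro ⟨u, hu, rfl⟩
    refine ⟨fun b hb => ?_, Sym.mem_cons_self a u⟩
    obtain rfl | hb := Sym.mem_cons.1 hb
    exacts [ha, hu b hb]

theorem filter_notMem_sym (S : Finset σ) (a : σ) (m : ℕ) :
    (S.sym m).filter (a ∉ ·) = (S.erase a).sym m := by
  ext t
  simp only [mem_filter, mem_sym_iff, mem_erase]
  grind

end Sym

section GeneratingFunctions

variable {σ : Type*} [DecidableEq σ] (R : Type*) [CommRing R]

theorem hsymIn_zero (S : Finset σ) : hsymIn R S 0 = 1 := by
  rw [hsymIn, sym_zero, sum_singleton]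
  exact Multiset.prod_zero

theorem hsymIn_singleton (a : σ) (m : ℕ) : hsymIn R {a} m = X a ^ m := by
  simp [hsymIn, Sym.coe_replicate]

theorem hsymIn_succ {S : Finset σ} {a : σ} (ha : a ∈ S) (m : ℕ) :
    hsymIn R S (m + 1) = X a * hsymIn R S m + hsymIn R (S.erase a) (m + 1) := by
  have sum_mem : ∑ t ∈ S.sym (m + 1) with a ∈ t, (t.1.map X).prod = X a * hsymIn R S m := by
    rw [filter_mem_sym_succ ha, sum_image fun t _ u _ => (Sym.cons_inj_right a t u).1, hsymIn,
      mul_sum]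
    exact sum_congr rfl fun t _ => by simp [Sym.cons]
  rw [← sum_mem, hsymIn, hsymIn, ← filter_notMem_sym, sum_filter_add_sum_filter_not]

/-- The generating function `∑ h_m(S) t^m` of the complete homogeneous symmetric polynomials in
the variables indexed by `S`, as a power series in `t` with polynomial coefficients. -/
noncomputable def hsymSeries (S : Finset σ) : PowerSeries (MvPolynomial σ R) :=
  PowerSeries.mk (hsymIn R S)

theorem one_sub_C_mul_X_mul_hsymSeries {S : Finset σ} {a : σ} (ha : a ∈ S) :
    (1 - PowerSeries.C (X a) * PowerSeries.X) * hsymSeries R S = hsymSeries R (S.erase a) := by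
  rw [sub_mul, one_mul, mul_assoc]
  ext1 m
  cases m with
  | zero => simp [hsymSeries, hsymIn_zero]
  | succ m =>
    simp only [hsymSeries, map_sub, PowerSeries.coeff_C_mul, PowerSeries.coeff_succ_X_mul,
      PowerSeries.coeff_mk, hsymIn_succ R ha, add_sub_cancel_left]

theorem prod_one_sub_C_mul_X_mul_hsymSeries {S T : Finset σ} (hST : S ⊆ T) :
    (∏ a ∈ S, (1 - PowerSeries.C (X a) * PowerSeries.X)) * hsymSeries R T =
      hsymSeries R (T \ S) := by
  induction S using Finset.induction_on with
  | empty => rw [prod_empty, one_mul, sdiff_empty]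
  | insert a S ha ih =>
    obtain ⟨haT, hST⟩ := insert_subset_iff.1 hST
    have ha_mem : a ∈ T \ S := mem_sdiff.2 ⟨haT, ha⟩
    rw [prod_insert ha, mul_assoc, ih hST, one_sub_C_mul_X_mul_hsymSeries R ha_mem, sdiff_insert]

theorem coeff_prod_one_sub_C_mul_X (S : Finset σ) (l : ℕ) :
    PowerSeries.coeff l
        (∏ a ∈ S, (1 - PowerSeries.C (X a : MvPolynomial σ R) * PowerSeries.X)) =
      (-1) ^ l * esymIn R S l := by
  have expand : ∏ a ∈ S, (1 - PowerSeries.C (X a : MvPolynomial σ R) * PowerSeries.X) =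
      ∑ T ∈ S.powerset, PowerSeries.C ((-1) ^ #T * ∏ a ∈ T, X a) * PowerSeries.X ^ #T := by
    simp only [sub_eq_add_neg, prod_one_add, prod_neg, prod_mul_distrib, prod_const, map_mul,
      map_pow, map_neg, map_one, map_prod, mul_assoc]
  simp only [expand, map_sum, PowerSeries.coeff_C_mul_X_pow, eq_comm (a := l), ← sum_filter,
    ← powersetCard_eq_filter, esymIn, mul_sum]
  exact sum_congr rfl fun T hT => by rw [(mem_powersetCard.1 hT).2]

end GeneratingFunctions

theorem pow_eq_alternating_esym_hsym_general {σ : Type*} [DecidableEq σ] (R : Type*) [CommRing R]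
    {S T : Finset σ} (hST : S ⊆ T) (r : ℕ) :
    hsymIn R (T \ S) r =
      ∑ l ∈ Finset.range (r + 1), (-1) ^ l * esymIn R S l * hsymIn R T (r - l) := by
  have coeff_eq := congrArg (PowerSeries.coeff r) (prod_one_sub_C_mul_X_mul_hsymSeries R hST)
  rw [PowerSeries.coeff_mul, Nat.sum_antidiagonal_eq_sum_range_succ_mk] at coeff_eq
  simpa only [hsymSeries, PowerSeries.coeff_mk, coeff_prod_one_sub_C_mul_X] using coeff_eq.symm

/-- For indeterminates `y_1, …, y_p, x` over a commutative ring `R` and every `r ≥ 0`: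
`x^r = Σ_{l=0}^{r} (−1)^l e_l(y_1,…,y_p) h_{r−l}(y_1,…,y_p,x)`.
Here the variable `x` is `X none` and the `y`'s are `X (some i)`. -/
theorem pow_eq_alternating_esym_hsym (R : Type*) [CommRing R] (p : ℕ) (r : ℕ) :
    (X none : MvPolynomial (Option (Fin p)) R) ^ r =
      ∑ l ∈ Finset.range (r + 1),
        (-1 : MvPolynomial (Option (Fin p)) R) ^ l *
          esymIn R ((Finset.univ : Finset (Fin p)).image Option.some) l *
          hsymIn R (Finset.univ : Finset (Option (Fin p))) (r - l) := by
  have sdiff_eq : (univ : Finset (Option (Fin p))) \ univ.image some = {none} := by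
    simp [Finset.ext_iff, Option.forall]
  rw [← pow_eq_alternating_esym_hsym_general R (subset_univ _), sdiff_eq, hsymIn_singleton]
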